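/- arXiv:1709.00442 — 3 statements merged into one kernel-verified Lean document; each statement's English description precedes it below -/
import Mathlib

section
/- The supersymmetry operators intertwine the open XXZ Hamiltonians of adjacent lengths: for every N ≥ 2, H^(N−1) ∘ Q^(N) = Q^(N) ∘ H^(N) as maps V^⊗N → V^⊗(N−1), and H^(N) ∘ Q^(N)† = Q^(N)† ∘ H^(N−1) as maps V^⊗(N−1) → V^⊗N. -/
noncomputable section
open Complex Matrix

/-- Spin configurations of a chain of `N` sites: `true` encodes `v₊`, `false` encodes `v₋`.
The site with label `i ∈ {1,…,N}` corresponds to the index `i-1 : Fin N`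
(so the leftmost site `N` is the index `N-1`). -/
abbrev Conf (N : ℕ) := Fin N → Bool

/-- The combinatorial-point parameter `η = 2πi/3`. -/
def ηc : ℂ := 2 * (Real.pi : ℂ) * Complex.I / 3

/-- `a(u) = sinh(u+η)/sinh η`. -/
def aF (u : ℂ) : ℂ := Complex.sinh (u + ηc) / Complex.sinh ηc
/-- `b(u) = sinh(u)/sinh η`. -/
def bF (u : ℂ) : ℂ := Complex.sinh u / Complex.sinh ηc
/-- `c(u) = 1`. -/
def cF (_ : ℂ) : ℂ := 1
/-- `d(u) = sinh(u-η)/sinh η`. -/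
def dF (u : ℂ) : ℂ := Complex.sinh (u - ηc) / Complex.sinh ηc
/-- The local SUSY generator `q_{i,i+1}` (with `i = k+1`) on a chain of `n+2` sites:
it applies `q : V⊗V → V`, `q(v₊⊗v₊) = v₋` (zero on the other basis vectors), to the
adjacent sites `i, i+1` (merging them into the single site `i` of the output chain of
`n+1` sites) and the identity to all other sites. -/
def qMerge (n : ℕ) (k : Fin (n + 1)) : Matrix (Conf (n + 1)) (Conf (n + 2)) ℂ :=
  Matrix.of fun o i =>
    if i (Fin.castSucc k) = true ∧ i (Fin.succ k) = true ∧ o k = false ∧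
        (∀ j : Fin (n + 1),
          ((j : ℕ) < (k : ℕ) → o j = i (Fin.castSucc j)) ∧
          ((k : ℕ) < (j : ℕ) → o j = i (Fin.succ j)))
    then 1 else 0

/-- The SUSY operator `Q^(N)` for `N = n+2`:
`Q^(N) = ∑_{i=1}^{N-1} (-1)^{i+1} q_{i,i+1} : V^⊗N → V^⊗(N-1)`. -/
def Qop (n : ℕ) : Matrix (Conf (n + 1)) (Conf (n + 2)) ℂ :=
  ∑ k : Fin (n + 1), ((-1 : ℂ) ^ (k : ℕ)) • qMerge n k

/-- The local operator `q†_i` (with `i = k+1`) on a chain of `n+1` sites: it applies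
`q† : V → V⊗V`, `q†(v₋) = v₊⊗v₊`, `q†(v₊) = 0`, to site `i` (splitting it into the two
adjacent sites `i, i+1` of the output chain of `n+2` sites) and the identity elsewhere. -/
def qSplit (n : ℕ) (k : Fin (n + 1)) : Matrix (Conf (n + 2)) (Conf (n + 1)) ℂ :=
  Matrix.of fun o i =>
    if o (Fin.castSucc k) = true ∧ o (Fin.succ k) = true ∧ i k = false ∧
        (∀ j : Fin (n + 1),
          ((j : ℕ) < (k : ℕ) → i j = o (Fin.castSucc j)) ∧
          ((k : ℕ) < (j : ℕ) → i j = o (Fin.succ j)))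
    then 1 else 0

/-- The adjoint SUSY operator `Q^(N)†` for `N = n+2`:
`Q^(N)† = ∑_{i=1}^{N-1} (-1)^{i+1} q†_i : V^⊗(N-1) → V^⊗N`. -/
def Qdag (n : ℕ) : Matrix (Conf (n + 2)) (Conf (n + 1)) ℂ :=
  ∑ k : Fin (n + 1), ((-1 : ℂ) ^ (k : ℕ)) • qSplit n k
/-- Pauli matrix `σˣ` in the basis `(v₊, v₋)`. -/
def sigmaX : Matrix Bool Bool ℂ := Matrix.of fun o i => if o ≠ i then 1 else 0
/-- Pauli matrix `σʸ` in the basis `(v₊, v₋)`. -/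
def sigmaY : Matrix Bool Bool ℂ :=
  Matrix.of fun o i =>
    if o = true ∧ i = false then -Complex.I else if o = false ∧ i = true then Complex.I else 0
/-- Pauli matrix `σᶻ` in the basis `(v₊, v₋)`. -/
def sigmaZ : Matrix Bool Bool ℂ :=
  Matrix.of fun o i => if o = i then (if o then 1 else -1) else 0

/-- A one-site operator `M` acting at site index `j` of a chain of `N` sites
(identity elsewhere). -/
def pauliAt (N : ℕ) (j : Fin N) (M : Matrix Bool Bool ℂ) :
    Matrix (Conf N) (Conf N) ℂ :=
  Matrix.of fun o i => (if ∀ l, l ≠ j → o l = i l then 1 else 0) * M (o j) (i j)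

/-- The open XXZ Hamiltonian `H^(N)` for `N = n+1`:
`H^(N) = -(1/2) ∑_{i=1}^{N-1} (σˣᵢσˣᵢ₊₁ + σʸᵢσʸᵢ₊₁ - (1/2)σᶻᵢσᶻᵢ₊₁)
  - (1/4)(σᶻ₁ + σᶻ_N) + ((3N-1)/4)·I`. -/
def Hop (n : ℕ) : Matrix (Conf (n + 1)) (Conf (n + 1)) ℂ :=
  (-(1 / 2 : ℂ)) • (∑ k : Fin n,
      (pauliAt (n + 1) (Fin.castSucc k) sigmaX * pauliAt (n + 1) (Fin.succ k) sigmaX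
        + pauliAt (n + 1) (Fin.castSucc k) sigmaY * pauliAt (n + 1) (Fin.succ k) sigmaY
        - (1 / 2 : ℂ) • (pauliAt (n + 1) (Fin.castSucc k) sigmaZ
            * pauliAt (n + 1) (Fin.succ k) sigmaZ)))
    - (1 / 4 : ℂ) • (pauliAt (n + 1) 0 sigmaZ + pauliAt (n + 1) (Fin.last n) sigmaZ)
    + ((3 * ((n : ℂ) + 1) - 1) / 4) • (1 : Matrix (Conf (n + 1)) (Conf (n + 1)) ℂ)
/-- `cons` operator: adjoin a spin `a` at the first site. -/
def Cc (a : Bool) (N : ℕ) : Matrix (Conf (N + 1)) (Conf N) ℂ :=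
  Matrix.of fun o i => if o = Fin.cons a i then 1 else 0

lemma mul_Cc {α : Type*} (a : Bool) (N : ℕ) (A : Matrix α (Conf (N + 1)) ℂ) (o : α)
    (i : Conf N) : (A * Cc a N) o i = A o (Fin.cons a i) := by
  simp [Matrix.mul_apply, Cc]

lemma mul_CcT {α : Type*} (a : Bool) (N : ℕ) (A : Matrix α (Conf N) ℂ) (o : α)
    (i : Conf (N + 1)) : (A * (Cc a N)ᵀ) o i = if i 0 = a then A o (Fin.tail i) else 0 := by
  obtain ⟨b, j, rfl⟩ : ∃ b j, i = Fin.cons b j := ⟨i 0, Fin.tail i, (Fin.cons_self_tail i).symm⟩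
  simp only [Matrix.mul_apply, Cc, Matrix.transpose_apply, Matrix.of_apply, Fin.cons_zero,
    Fin.tail_cons, Fin.cons_inj]
  by_cases h : b = a
  · simp [h]
  · simp [h]

lemma Cc_mul {α : Type*} (a : Bool) (N : ℕ) (A : Matrix (Conf N) α ℂ) (o : Conf (N + 1))
    (i : α) : (Cc a N * A) o i = if o 0 = a then A (Fin.tail o) i else 0 := by
  have := mul_CcT a N Aᵀ i o
  rw [← Matrix.transpose_mul] at this
  simpa using this

lemma Cc_mul_cons {α : Type*} (a b : Bool) (N : ℕ) (A : Matrix (Conf N) α ℂ) (o : Conf N)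
    (i : α) : (Cc a N * A) (Fin.cons b o) i = if b = a then A o i else 0 := by
  rw [Cc_mul]; simp

lemma ext_Cc {α : Type*} {N : ℕ} {A B : Matrix α (Conf (N + 1)) ℂ}
    (h : ∀ a, A * Cc a N = B * Cc a N) : A = B := by
  ext o i
  have := congrFun (congrFun (h (i 0)) o) (Fin.tail i)
  simpa [mul_Cc] using this

lemma CcT_Cc (a b : Bool) (N : ℕ) :
    (Cc a N)ᵀ * Cc b N = if a = b then 1 else 0 := by
  ext o i
  rw [mul_Cc]
  by_cases h : a = b
  · subst h; simp [Cc, Matrix.one_apply, eq_comm]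
  · have h' : ¬ b = a := fun h' => h h'.symm
    simp [Cc, h, h']

lemma CcT_Cc_assoc {α : Type*} (a b : Bool) (N : ℕ) (A : Matrix (Conf N) α ℂ) :
    (Cc a N)ᵀ * (Cc b N * A) = if a = b then A else 0 := by
  rw [← Matrix.mul_assoc, CcT_Cc]; split_ifs <;> simp

lemma Cc_CcT_apply (a b c d : Bool) (N : ℕ) (o i : Conf N) :
    (Cc a N * (Cc b N)ᵀ) (Fin.cons c o) (Fin.cons d i) =
      if c = a ∧ d = b ∧ ∀ l, o l = i l then 1 else 0 := by
  rw [Cc_mul_cons, Matrix.transpose_apply, Cc, Matrix.of_apply]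
  have h : Fin.cons d i = (Fin.cons b o : Conf (N + 1)) ↔ d = b ∧ ∀ l, o l = i l := by
    rw [Fin.cons_inj, ← funext_iff, @eq_comm _ i o]
  simp only [h, ite_and]

/-- uniform version of `Qop`. -/
def QQ : (N : ℕ) → Matrix (Conf N) (Conf (N + 1)) ℂ
  | 0 => 0
  | n + 1 => Qop n

lemma qMerge_succ (n : ℕ) (k : Fin (n + 1)) (a : Bool) :
    qMerge (n + 1) k.succ * Cc a (n + 2) = Cc a (n + 1) * qMerge n k := by
  ext o i
  obtain ⟨b, o, rfl⟩ : ∃ b j, o = Fin.cons b j := ⟨o 0, Fin.tail o, (Fin.cons_self_tail o).symm⟩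
  rw [mul_Cc, Cc_mul_cons]
  by_cases h : b = a
  · simp [qMerge, Fin.forall_fin_succ (n := n + 1), h]
  · simp [qMerge, Fin.forall_fin_succ (n := n + 1), h]

lemma qMerge_zero (n : ℕ) (a : Bool) :
    qMerge n 0 * Cc a (n + 1) = if a = true then Cc false n * (Cc true n)ᵀ else 0 := by
  ext o i
  obtain ⟨b, o, rfl⟩ : ∃ b j, o = Fin.cons b j := ⟨o 0, Fin.tail o, (Fin.cons_self_tail o).symm⟩
  obtain ⟨c, i, rfl⟩ : ∃ b j, i = Fin.cons b j := ⟨i 0, Fin.tail i, (Fin.cons_self_tail i).symm⟩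
  rw [mul_Cc]
  cases a
  · simp [qMerge]
  · cases b <;> cases c <;>
      simp [qMerge, Fin.forall_fin_succ (n := n), Cc_CcT_apply]

lemma QQ_rec (N : ℕ) (a : Bool) : QQ (N + 1) * Cc a (N + 1) =
    (if a = true then Cc false N * (Cc true N)ᵀ else 0) - Cc a N * QQ N := by
  cases N with
  | zero => simp [QQ, Qop, qMerge_zero]
  | succ n =>
    simp only [QQ, Qop]
    rw [Fin.sum_univ_succ]
    rw [Matrix.add_mul, Matrix.sum_mul]
    simp only [Matrix.smul_mul, qMerge_succ, qMerge_zero, Matrix.mul_sum, Matrix.mul_smul]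
    simp only [Fin.val_zero, pow_zero, one_smul, Fin.val_succ, pow_succ,
      mul_neg, mul_one, neg_smul, Finset.sum_neg_distrib, sub_eq_add_neg]

lemma Qdag_eq (n : ℕ) : Qdag n = (Qop n)ᵀ := by
  simp only [Qdag, Qop, Matrix.transpose_sum, Matrix.transpose_smul]
  rfl

lemma QQ_CT (N : ℕ) (a : Bool) : (Cc a N)ᵀ * QQ (N + 1) =
    (if a = true then 0 else (Cc true N)ᵀ * (Cc true (N + 1))ᵀ)
      - QQ N * (Cc a (N + 1))ᵀ := by
  apply ext_Cc
  intro b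
  cases a <;> cases b <;>
    simp [Matrix.mul_assoc, QQ_rec, Matrix.mul_sub, Matrix.sub_mul, CcT_Cc, CcT_Cc_assoc]

lemma QQ_sq (N : ℕ) : QQ N * QQ (N + 1) = 0 := by
  induction N with
  | zero => simp [QQ]
  | succ N ih =>
    apply ext_Cc
    intro a
    cases a
    · simp [Matrix.mul_assoc, QQ_rec]
      simp [← Matrix.mul_assoc, QQ_rec]
      simp [Matrix.mul_assoc, ih]
    · simp [Matrix.mul_assoc, QQ_rec, Matrix.mul_sub]
      simp [← Matrix.mul_assoc, QQ_rec]
      simp [Matrix.mul_assoc, ih, QQ_CT, Matrix.sub_mul]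

lemma QT_rec (N : ℕ) (a : Bool) : (QQ (N + 1))ᵀ * Cc a N =
    (if a = true then 0 else Cc true (N + 1) * Cc true N) - Cc a (N + 1) * (QQ N)ᵀ := by
  have := congrArg Matrix.transpose (QQ_CT N a)
  rw [Matrix.transpose_mul] at this
  cases a <;> simpa using this

lemma QT_CT (N : ℕ) : (Cc true (N + 1))ᵀ * (QQ (N + 1))ᵀ =
    Cc true N * (Cc false N)ᵀ - (QQ N)ᵀ * (Cc true N)ᵀ := by
  have := congrArg Matrix.transpose (QQ_rec N true)
  rw [Matrix.transpose_mul] at this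
  simpa using this

/-- The supersymmetric Hamiltonian. -/
def DD (N : ℕ) : Matrix (Conf (N + 1)) (Conf (N + 1)) ℂ :=
  QQ (N + 1) * (QQ (N + 1))ᵀ + (QQ N)ᵀ * QQ N

lemma DD_true (N : ℕ) : DD (N + 1) * Cc true (N + 1) = Cc true (N + 1) * DD N
    + Cc true (N + 1) * (Cc true N * (Cc true N)ᵀ)
    - Cc false (N + 1) * (Cc true N * (Cc false N)ᵀ) := by
  simp only [DD, Matrix.add_mul, Matrix.mul_add, Matrix.mul_assoc, QQ_rec, QT_rec]
  simp only [if_true, Matrix.mul_sub, zero_sub, Matrix.mul_neg]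
  simp only [← Matrix.mul_assoc, QQ_rec, QT_rec]
  simp [Matrix.mul_assoc, Matrix.sub_mul, QT_CT, Matrix.mul_sub]
  abel

lemma DD_false (N : ℕ) : DD (N + 1) * Cc false (N + 1) = Cc false (N + 1) * DD N
    + Cc false (N + 1) - Cc true (N + 1) * (Cc false N * (Cc true N)ᵀ) := by
  simp only [DD, Matrix.add_mul, Matrix.mul_add, Matrix.mul_assoc, QQ_rec, QT_rec]
  simp only [if_false, Bool.false_eq_true, Matrix.mul_sub, zero_sub, Matrix.mul_neg]
  simp only [← Matrix.mul_assoc, QQ_rec, QT_rec]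
  simp [Matrix.mul_assoc, Matrix.sub_mul, Matrix.mul_sub, QQ_rec, CcT_Cc]
  abel

lemma DD_zero : DD 0 = Cc false 0 * (Cc false 0)ᵀ := by
  apply ext_Cc
  intro a
  cases a <;> simp [DD, Matrix.add_mul, Matrix.mul_assoc, QT_rec, CcT_Cc]
  · simp only [Matrix.mul_sub]
    simp only [← Matrix.mul_assoc, QQ_rec]
    simp [Matrix.mul_assoc, Matrix.sub_mul, CcT_Cc, QQ]
  · simp [QQ]

lemma pauli_succ (N : ℕ) (j : Fin N) (M : Matrix Bool Bool ℂ) (a : Bool) :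
    pauliAt (N + 1) j.succ M * Cc a N = Cc a N * pauliAt N j M := by
  ext o i
  obtain ⟨b, o, rfl⟩ : ∃ b j, o = Fin.cons b j := ⟨o 0, Fin.tail o, (Fin.cons_self_tail o).symm⟩
  rw [mul_Cc, Cc_mul_cons]
  by_cases h : b = a
  · simp [pauliAt, Fin.forall_fin_succ (n := N), h, (Fin.succ_ne_zero j).symm]
  · simp [pauliAt, Fin.forall_fin_succ (n := N), h, (Fin.succ_ne_zero j).symm]

lemma pauli_zero (N : ℕ) (M : Matrix Bool Bool ℂ) :
    pauliAt (N + 1) 0 M = ∑ a, ∑ b, M a b • (Cc a N * (Cc b N)ᵀ) := by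
  ext o i
  obtain ⟨b, o, rfl⟩ : ∃ b j, o = Fin.cons b j := ⟨o 0, Fin.tail o, (Fin.cons_self_tail o).symm⟩
  obtain ⟨c, i, rfl⟩ : ∃ b j, i = Fin.cons b j := ⟨i 0, Fin.tail i, (Fin.cons_self_tail i).symm⟩
  cases b <;> cases c <;>
    simp [pauliAt, Fin.forall_fin_succ (n := N), Cc_CcT_apply]

lemma one_rec (N : ℕ) : (1 : Matrix (Conf (N + 1)) (Conf (N + 1)) ℂ) =
    Cc true N * (Cc true N)ᵀ + Cc false N * (Cc false N)ᵀ := by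
  apply ext_Cc
  intro a
  cases a <;> simp [Matrix.add_mul, Matrix.mul_assoc, CcT_Cc]

lemma Hop_zero : Hop 0 = Cc false 0 * (Cc false 0)ᵀ := by
  simp [Hop, pauli_zero, one_rec 0, sigmaZ]
  module

lemma Hop_succ (n : ℕ) (a : Bool) : Hop (n + 1) * Cc a (n + 1) =
    Cc a (n + 1) * Hop n + if a = true then Cc true (n + 1) * (Cc true n * (Cc true n)ᵀ)
    - Cc false (n + 1) * (Cc true n * (Cc false n)ᵀ)
    else Cc false (n + 1) - Cc true (n + 1) * (Cc false n * (Cc true n)ᵀ) := by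
  have h1 : Cc a (n + 1) = Cc a (n + 1) * (Cc true n * (Cc true n)ᵀ)
      + Cc a (n + 1) * (Cc false n * (Cc false n)ᵀ) := by
    rw [← Matrix.mul_add, ← one_rec, Matrix.mul_one]
  have hb : ∀ k : Fin n, ∀ M, pauliAt (n + 2) k.succ.castSucc M * Cc a (n + 1)
      = Cc a (n + 1) * pauliAt (n + 1) k.castSucc M := fun k M => by
    rw [← Fin.succ_castSucc, pauli_succ]
  have hz : ∀ M, pauliAt (n + 2) 0 M * Cc a (n + 1) = ∑ b, M b a • Cc b (n + 1) := fun M => by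
    rw [pauli_zero]
    cases a <;> simp [Matrix.add_mul, Matrix.mul_assoc, CcT_Cc]
  have h0 : ∀ M, pauliAt (n + 2) 0 M * (Cc a (n + 1) * pauliAt (n + 1) 0 M) =
      ∑ b, ∑ c, ∑ d, M b a • M c d • (Cc b (n + 1) * (Cc c n * (Cc d n)ᵀ)) := fun M => by
    rw [← Matrix.mul_assoc, hz, pauli_zero]
    simp only [Matrix.sum_mul, Matrix.mul_sum, Matrix.smul_mul, Matrix.mul_smul,
      Fintype.sum_bool, Matrix.add_mul, Matrix.mul_add]
    module
  have hl : ∀ M, pauliAt (n + 2) (Fin.last (n + 1)) M * Cc a (n + 1)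
      = Cc a (n + 1) * pauliAt (n + 1) (Fin.last n) M := fun M => by
    rw [← Fin.succ_last, pauli_succ]
  have hs : ∀ M, pauliAt (n + 2) 1 M * Cc a (n + 1)
      = Cc a (n + 1) * pauliAt (n + 1) 0 M := fun M => by
    rw [← Fin.succ_zero_eq_one, pauli_succ]
  have hc : ∀ k : Fin n, ∀ M, pauliAt (n + 2) k.succ.castSucc M
      * (Cc a (n + 1) * pauliAt (n + 1) k.succ M)
      = Cc a (n + 1) * (pauliAt (n + 1) k.castSucc M * pauliAt (n + 1) k.succ M) := fun k M => by
    rw [← Matrix.mul_assoc, hb, Matrix.mul_assoc]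
  unfold Hop
  rw [Fin.sum_univ_succ]
  simp only [Matrix.add_mul, Matrix.sub_mul, Matrix.smul_mul, Matrix.sum_mul, Matrix.mul_assoc,
    pauli_succ, hl, hc, hz, h0, Fin.castSucc_zero, Matrix.mul_add, Matrix.mul_sub,
    Matrix.mul_smul, Matrix.mul_sum, Matrix.one_mul, Matrix.mul_one]
  rw [pauli_zero n sigmaZ]
  generalize (∑ k : Fin n, _ : Matrix (Conf (n + 2)) (Conf (n + 1)) ℂ) = S
  cases a
  · simp [sigmaX, sigmaY, sigmaZ, smul_smul, Matrix.mul_add, Matrix.mul_sub]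
    module
  · simp [sigmaX, sigmaY, sigmaZ, smul_smul, Matrix.mul_add, Matrix.mul_sub]
    linear_combination (norm := module) (1 / 2 : ℂ) • h1

lemma Hop_eq (n : ℕ) : Hop n = DD n := by
  induction n with
  | zero => rw [Hop_zero, DD_zero]
  | succ n ih =>
    apply ext_Cc
    intro a
    rw [Hop_succ, ih]
    cases a
    · rw [DD_false]; simp; abel
    · rw [DD_true]; simp; abel

theorem main_aux (n : ℕ) :
    Hop n * Qop n = Qop n * Hop (n + 1) ∧ Hop (n + 1) * Qdag n = Qdag n * Hop n := by
  have hQ : Qop n = QQ (n + 1) := rfl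
  have t : ∀ N, (QQ (N + 1))ᵀ * (QQ N)ᵀ = 0 := fun N => by
    rw [← Matrix.transpose_mul, QQ_sq, Matrix.transpose_zero]
  rw [Qdag_eq, hQ, Hop_eq, Hop_eq, DD, DD]
  constructor
  · rw [Matrix.add_mul, Matrix.mul_add, Matrix.mul_assoc _ (QQ n), QQ_sq,
      ← Matrix.mul_assoc _ (QQ (n + 1 + 1)), QQ_sq]
    simp [Matrix.mul_assoc]
  · rw [Matrix.add_mul, Matrix.mul_add, Matrix.mul_assoc _ (QQ (n + 1 + 1))ᵀ, t,
      ← Matrix.mul_assoc _ (QQ n)ᵀ, t]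
    simp [Matrix.mul_assoc]

/-- the SUSY operators intertwine the Hamiltonians of adjacent lengths,
`H^(N-1) ∘ Q^(N) = Q^(N) ∘ H^(N)` and `H^(N) ∘ Q^(N)† = Q^(N)† ∘ H^(N-1)` for every
`N = n+2 ≥ 2` (`Hop n = H^(n+1)`, `Qop n = Q^(n+2)`, `Qdag n = Q^(n+2)†`). -/
theorem SUSY_intertwines_H (n : ℕ) :
    Hop n * Qop n = Qop n * Hop (n + 1) ∧ Hop (n + 1) * Qdag n = Qdag n * Hop n := by
  exact main_aux n
end
end

section
/- (Theorem 1, ℬ-relation) For every N ≥ 2 and every u ∈ ℂ: Q^(N) ∘ ℬ^(N)(u) = d(u)² · ℬ^(N−1)(u) ∘ Q^(N) as linear maps V^⊗N → V^⊗(N−1). -/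
noncomputable section
open Complex Matrix

/-- The R-matrix `R(u)` on `V⊗V` in the ordered basis `(v₊⊗v₊, v₊⊗v₋, v₋⊗v₊, v₋⊗v₋)`:
`[[a,0,0,0],[0,b,c,0],[0,c,b,0],[0,0,0,a]]`. -/
def Rm (u : ℂ) : Matrix (Bool × Bool) (Bool × Bool) ℂ :=
  Matrix.of fun o i =>
    if o = i then (if o.1 = o.2 then aF u else bF u)
    else if o.1 = i.2 ∧ o.2 = i.1 ∧ o.1 ≠ o.2 then cF u
    else 0

/-- The boundary K-matrix `K⁻(u) = diag(d(u), -a(u))` in the basis `(v₊, v₋)`. -/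
def Km (u : ℂ) : Matrix Bool Bool ℂ :=
  Matrix.of fun o i => if o = i then (if o then dF u else -aF u) else 0

/-- `R₀ᵢ(u)`: the matrix `R(u)` applied to `V₀ ⊗ Vᵢ` (auxiliary space first), identity
elsewhere, on `V₀ ⊗ V^⊗N`; here the site with label `i` is the index `i-1`. -/
def R0i (N : ℕ) (u : ℂ) (i : Fin N) :
    Matrix (Bool × Conf N) (Bool × Conf N) ℂ :=
  Matrix.of fun x y =>
    if ∀ j, j ≠ i → x.2 j = y.2 j then Rm u (x.1, x.2 i) (y.1, y.2 i) else 0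

/-- `Rᵢ₀(u)`: the matrix `R(u)` applied to `Vᵢ ⊗ V₀` (auxiliary space second), identity
elsewhere, on `V₀ ⊗ V^⊗N`. -/
def Ri0 (N : ℕ) (u : ℂ) (i : Fin N) :
    Matrix (Bool × Conf N) (Bool × Conf N) ℂ :=
  Matrix.of fun x y =>
    if ∀ j, j ≠ i → x.2 j = y.2 j then Rm u (x.2 i, x.1) (y.2 i, y.1) else 0

/-- `T^(N)(u) = R₀₁(u) R₀₂(u) ⋯ R₀N(u)`. -/
def Tmono (N : ℕ) (u : ℂ) : Matrix (Bool × Conf N) (Bool × Conf N) ℂ :=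
  (List.ofFn fun i : Fin N => R0i N u i).prod

/-- `T̄^(N)(u) = R_{N0}(u) ⋯ R_{20}(u) R_{10}(u)`. -/
def Tbar (N : ℕ) (u : ℂ) : Matrix (Bool × Conf N) (Bool × Conf N) ℂ :=
  (List.ofFn fun i : Fin N => Ri0 N u i).reverse.prod

/-- `K₀⁻(u)`: the matrix `K⁻(u)` acting on the auxiliary space `V₀`, identity on `V^⊗N`. -/
def K0m (N : ℕ) (u : ℂ) : Matrix (Bool × Conf N) (Bool × Conf N) ℂ :=
  Matrix.of fun x y => if x.2 = y.2 then Km u x.1 y.1 else 0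

/-- The double-row monodromy matrix `U^(N)(u) = T̄^(N)(u) K₀⁻(u) T^(N)(u)`. -/
def Umono (N : ℕ) (u : ℂ) : Matrix (Bool × Conf N) (Bool × Conf N) ℂ :=
  Tbar N u * K0m N u * Tmono N u

/-- `𝒜^(N)(u)`: the `(v₊, v₊)` auxiliary-space block of `U^(N)(u)`. -/
def Aop (N : ℕ) (u : ℂ) : Matrix (Conf N) (Conf N) ℂ :=
  Matrix.of fun s t => Umono N u (true, s) (true, t)
/-- `ℬ^(N)(u)`: the `(v₊, v₋)` auxiliary-space block of `U^(N)(u)`. -/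
def Bop (N : ℕ) (u : ℂ) : Matrix (Conf N) (Conf N) ℂ :=
  Matrix.of fun s t => Umono N u (true, s) (false, t)
/-- `𝒞^(N)(u)`: the `(v₋, v₊)` auxiliary-space block of `U^(N)(u)`. -/
def Cop (N : ℕ) (u : ℂ) : Matrix (Conf N) (Conf N) ℂ :=
  Matrix.of fun s t => Umono N u (false, s) (true, t)
/-- `𝒟^(N)(u)`: the `(v₋, v₋)` auxiliary-space block of `U^(N)(u)`. -/
def Dop (N : ℕ) (u : ℂ) : Matrix (Conf N) (Conf N) ℂ :=
  Matrix.of fun s t => Umono N u (false, s) (false, t)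

/-- The transfer matrix
`t^(N)(u) = (sinh u / sinh η) 𝒜^(N)(u) - (sinh(u+2η)/sinh η) 𝒟^(N)(u)`. -/
def tOp (N : ℕ) (u : ℂ) : Matrix (Conf N) (Conf N) ℂ :=
  (Complex.sinh u / Complex.sinh ηc) • Aop N u
    - (Complex.sinh (u + 2 * ηc) / Complex.sinh ηc) • Dop N u

/-- The pseudovacuum `Ω^(N) = v₊ ⊗ ⋯ ⊗ v₊`. -/
def Omega (N : ℕ) : Conf N → ℂ := fun s => if ∀ j, s j = true then 1 else 0

/-- `E^ε ⊗ X : V^⊗(n+2) → V^⊗(n+1)`: the linear functional `E^ε : V → ℂ`, `v_ε ↦ 1`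
(zero on the other basis vector), applied to the leftmost site `N = n+2`, tensored with
the operator `X` on the remaining sites `n+1,…,1`.  Here `e = true` encodes `ε = +`. -/
def Etens (n : ℕ) (e : Bool) (X : Matrix (Conf (n + 1)) (Conf (n + 1)) ℂ) :
    Matrix (Conf (n + 1)) (Conf (n + 2)) ℂ :=
  Matrix.of fun o i =>
    (if i (Fin.last (n + 1)) = e then 1 else 0) * X o (fun j => i (Fin.castSucc j))

/-- `F ⊗ X` : the one-site operator `F` applied to the leftmost site `N+1` of a chain of
`N+1` sites, tensored with the operator `X` on the remaining sites `N,…,1`. -/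
def siteTens (N : ℕ) (F : Matrix Bool Bool ℂ) (X : Matrix (Conf N) (Conf N) ℂ) :
    Matrix (Conf (N + 1)) (Conf (N + 1)) ℂ :=
  Matrix.of fun o i =>
    F (o (Fin.last N)) (i (Fin.last N)) * X (fun j => o (Fin.castSucc j)) (fun j => i (Fin.castSucc j))

/-- `E^ε_{ε'} : V → V` sends `v_ε ↦ v_{ε'}` and the other basis vector to `0`
(`true` encodes `+`). -/
def Eop (e e' : Bool) : Matrix Bool Bool ℂ :=
  Matrix.of fun o i => if i = e ∧ o = e' then 1 else 0
/-! ### Auxiliary material for the proof -/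

theorem QBaux_sum_conf (N : ℕ) (F : Conf (N + 1) → ℂ) :
    ∑ r, F r = ∑ r : Conf N, ∑ z : Bool, F (Fin.snoc (α := fun _ => Bool) r z) := by
  rw [← Fintype.sum_prod_type' (f := fun (r : Conf N) (z : Bool) =>
    F (Fin.snoc (α := fun _ => Bool) r z))]
  refine (Fintype.sum_bijective (fun p : Conf N × Bool =>
    (Fin.snoc (α := fun _ => Bool) p.1 p.2 : Conf (N + 1))) ?_ _ _ (fun _ => rfl)).symm
  constructor
  · rintro ⟨r, z⟩ ⟨r', z'⟩ h
    have h1 := congrArg (fun c : Conf (N + 1) => c (Fin.last N)) h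
    have h2 := congrArg (fun c : Conf (N + 1) => Fin.init (α := fun _ => Bool) c) h
    simp at h1 h2
    simp [h1, h2]
  · intro c
    exact ⟨(Fin.init (α := fun _ => Bool) c, c (Fin.last N)), Fin.snoc_init_self c⟩

/-- Tensoring with the identity on a new last site. -/
def QBaux_lift (N : ℕ) (M : Matrix (Bool × Conf N) (Bool × Conf N) ℂ) :
    Matrix (Bool × Conf (N + 1)) (Bool × Conf (N + 1)) ℂ :=
  Matrix.of fun x y =>
    if x.2 (Fin.last N) = y.2 (Fin.last N) then
      M (x.1, Fin.init (α := fun _ => Bool) x.2) (y.1, Fin.init (α := fun _ => Bool) y.2) else 0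

theorem QBaux_lift_mul (N : ℕ) (M M' : Matrix (Bool × Conf N) (Bool × Conf N) ℂ) :
    QBaux_lift N (M * M') = QBaux_lift N M * QBaux_lift N M' := by
  ext ⟨e, s⟩ ⟨f, t⟩
  simp only [QBaux_lift, Matrix.mul_apply, Matrix.of_apply, Fintype.sum_prod_type,
    QBaux_sum_conf, Fin.snoc_last, Fin.init_snoc]
  by_cases h : s (Fin.last N) = t (Fin.last N)
  · simp only [h, if_true]
    refine Finset.sum_congr rfl fun g _ => Finset.sum_congr rfl fun r _ => ?_
    cases t (Fin.last N) <;> simp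
  · rw [if_neg h]
    symm
    refine Finset.sum_eq_zero fun g _ => Finset.sum_eq_zero fun r _ =>
      Finset.sum_eq_zero fun z _ => ?_
    by_cases h1 : s (Fin.last N) = z
    · have h2 : ¬ z = t (Fin.last N) := by rw [← h1]; exact h
      rw [if_neg h2, mul_zero]
    · rw [if_neg h1, zero_mul]

theorem QBaux_init_eq_iff {N : ℕ} (s t : Conf (N + 1)) :
    s = t ↔ s (Fin.last N) = t (Fin.last N) ∧
      Fin.init (α := fun _ => Bool) s = Fin.init (α := fun _ => Bool) t := by
  constructor
  · rintro rfl; exact ⟨rfl, rfl⟩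
  · rintro ⟨h1, h2⟩
    rw [← Fin.snoc_init_self s, ← Fin.snoc_init_self t, h1, h2]

theorem QBaux_lift_one (N : ℕ) : QBaux_lift N 1 = 1 := by
  ext ⟨e, s⟩ ⟨f, t⟩
  simp only [QBaux_lift, Matrix.of_apply, Matrix.one_apply, Prod.mk.injEq, QBaux_init_eq_iff s t]
  split_ifs <;> simp_all

theorem QBaux_lift_list (N : ℕ) (l : List (Matrix (Bool × Conf N) (Bool × Conf N) ℂ)) :
    QBaux_lift N l.prod = (l.map (QBaux_lift N)).prod := by
  induction l with
  | nil => simp [QBaux_lift_one]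
  | cons x l ih => simp [QBaux_lift_mul, ih]

theorem QBaux_cond {N : ℕ} (i : Fin N) (s t : Conf (N + 1)) :
    (∀ j, j ≠ i.castSucc → s j = t j) ↔ s (Fin.last N) = t (Fin.last N) ∧
      ∀ j, j ≠ i → Fin.init (α := fun _ => Bool) s j = Fin.init (α := fun _ => Bool) t j := by
  constructor
  · intro h
    refine ⟨h _ (Fin.castSucc_lt_last i).ne', fun j hj => h _ ?_⟩
    simpa using hj
  · rintro ⟨h1, h2⟩ j
    refine Fin.lastCases ?_ ?_ j
    · intro _; exact h1
    · intro j hj; exact h2 j (by simpa using hj)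

theorem QBaux_cond_last {N : ℕ} (s t : Conf (N + 1)) :
    (∀ j, j ≠ Fin.last N → s j = t j) ↔
      Fin.init (α := fun _ => Bool) s = Fin.init (α := fun _ => Bool) t := by
  constructor
  · intro h
    funext j
    exact h _ (Fin.castSucc_lt_last j).ne
  · intro h j
    refine Fin.lastCases ?_ ?_ j
    · intro hj; exact absurd rfl hj
    · intro j hj; exact congrFun h j

theorem QBaux_R0i (N : ℕ) (u : ℂ) (i : Fin N) :
    R0i (N + 1) u i.castSucc = QBaux_lift N (R0i N u i) := by
  ext ⟨e, s⟩ ⟨f, t⟩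
  simp only [R0i, QBaux_lift, Matrix.of_apply, QBaux_cond i s t, ite_and]
  rfl

theorem QBaux_Ri0 (N : ℕ) (u : ℂ) (i : Fin N) :
    Ri0 (N + 1) u i.castSucc = QBaux_lift N (Ri0 N u i) := by
  ext ⟨e, s⟩ ⟨f, t⟩
  simp only [Ri0, QBaux_lift, Matrix.of_apply, QBaux_cond i s t, ite_and]
  rfl

theorem QBaux_K0m (N : ℕ) (u : ℂ) : K0m (N + 1) u = QBaux_lift N (K0m N u) := by
  ext ⟨e, s⟩ ⟨f, t⟩
  simp only [K0m, QBaux_lift, Matrix.of_apply, QBaux_init_eq_iff s t, ite_and]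

theorem QBaux_Tmono (N : ℕ) (u : ℂ) :
    Tmono (N + 1) u = QBaux_lift N (Tmono N u) * R0i (N + 1) u (Fin.last N) := by
  simp only [Tmono, List.ofFn_succ', List.concat_eq_append, List.prod_append, QBaux_lift_list,
    List.map_ofFn, QBaux_R0i]
  simp [Function.comp_def]

theorem QBaux_Tbar (N : ℕ) (u : ℂ) :
    Tbar (N + 1) u = Ri0 (N + 1) u (Fin.last N) * QBaux_lift N (Tbar N u) := by
  simp only [Tbar, List.ofFn_succ', List.concat_eq_append, List.reverse_append, List.prod_append,
    QBaux_lift_list, List.map_reverse, List.map_ofFn, QBaux_Ri0]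
  simp [Function.comp_def]

theorem QBaux_Umono (N : ℕ) (u : ℂ) :
    Umono (N + 1) u = Ri0 (N + 1) u (Fin.last N) * QBaux_lift N (Umono N u) *
      R0i (N + 1) u (Fin.last N) := by
  simp only [Umono, QBaux_Tbar, QBaux_Tmono, QBaux_K0m, QBaux_lift_mul, Matrix.mul_assoc]

/-- The recursion for the double-row monodromy matrix. -/
theorem QBaux_U_rec (N : ℕ) (u : ℂ) (e f x y : Bool) (s t : Conf N) :
    Umono (N + 1) u (e, Fin.snoc (α := fun _ => Bool) s x)
      (f, Fin.snoc (α := fun _ => Bool) t y) =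
    ∑ g : Bool, ∑ h : Bool, ∑ z : Bool,
      Rm u (x, e) (z, g) * Rm u (h, z) (f, y) * Umono N u (g, s) (h, t) := by
  rw [QBaux_Umono]
  simp only [Ri0, R0i, QBaux_lift, Matrix.mul_apply, Matrix.of_apply, Fintype.sum_prod_type,
    QBaux_sum_conf, Fin.snoc_last, Fin.init_snoc, QBaux_cond_last]
  simp [ite_mul, mul_ite, Finset.sum_ite_eq, Finset.sum_ite_eq']
  ring

/-- Recursive form of the supercharge. -/
def QBaux_Q : (N : ℕ) → Conf N → Conf (N + 1) → ℂ
  | 0, _, _ => 0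
  | N + 1, o, i =>
    (if o (Fin.last N) = i (Fin.last (N + 1)) then
      QBaux_Q N (Fin.init (α := fun _ => Bool) o) (Fin.init (α := fun _ => Bool) i) else 0) +
    (-1) ^ N * (if i (Fin.last N).castSucc = true ∧ i (Fin.last (N + 1)) = true ∧
      o (Fin.last N) = false ∧ Fin.init (α := fun _ => Bool) o =
        Fin.init (α := fun _ => Bool) (Fin.init (α := fun _ => Bool) i) then 1 else 0)

theorem QBaux_merge_castSucc (n : ℕ) (k : Fin (n + 1)) (o : Conf (n + 2)) (i : Conf (n + 3)) :
    qMerge (n + 1) k.castSucc o i = if o (Fin.last (n + 1)) = i (Fin.last (n + 2)) then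
      qMerge n k (Fin.init (α := fun _ => Bool) o) (Fin.init (α := fun _ => Bool) i) else 0 := by
  simp only [qMerge, Matrix.of_apply, ← ite_and]
  refine if_congr ?_ rfl rfl
  rw [Fin.forall_fin_succ']
  have hk : ¬ (n + 1 < (k : ℕ)) := by have := k.2; omega
  have hk' : (k : ℕ) < n + 1 := k.2
  simp only [Fin.val_castSucc, Fin.val_last, hk, hk', Fin.succ_last, Fin.init, Fin.succ_castSucc]
  tauto

theorem QBaux_merge_last (n : ℕ) (o : Conf (n + 1)) (i : Conf (n + 2)) :
    qMerge n (Fin.last n) o i = (if i (Fin.last n).castSucc = true ∧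
      i (Fin.last (n + 1)) = true ∧
      o (Fin.last n) = false ∧ Fin.init (α := fun _ => Bool) o =
        Fin.init (α := fun _ => Bool) (Fin.init (α := fun _ => Bool) i) then 1 else 0) := by
  simp only [qMerge, Matrix.of_apply]
  refine if_congr ?_ rfl rfl
  rw [Fin.forall_fin_succ', funext_iff]
  have h (j : Fin n) : ¬ (n < (j : ℕ)) := by have := j.2; omega
  simp only [Fin.val_castSucc, Fin.val_last, Fin.is_lt, h, Fin.succ_last, Fin.init]
  simp

theorem QBaux_Qop (n : ℕ) (o : Conf (n + 1)) (i : Conf (n + 2)) :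
    Qop n o i = QBaux_Q (n + 1) o i := by
  induction n with
  | zero =>
    simp only [Qop, QBaux_Q, Fin.sum_univ_castSucc, Matrix.add_apply, Matrix.smul_apply,
      QBaux_merge_last]
    simp
  | succ n ih =>
    rw [QBaux_Q, ← ih, ← QBaux_merge_last]
    simp only [Qop]
    rw [Fin.sum_univ_castSucc]
    simp only [Matrix.add_apply, Matrix.sum_apply, Matrix.smul_apply, QBaux_merge_castSucc,
      smul_eq_mul, Fin.val_castSucc, Fin.val_last]
    congr 1
    split_ifs <;> simp

theorem QBaux_Q_rec_left (N : ℕ) (s : Conf N) (x : Bool) (F : Conf (N + 2) → ℂ) :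
    ∑ r, QBaux_Q (N + 1) (Fin.snoc (α := fun _ => Bool) s x) r * F r =
      ∑ r, QBaux_Q N s r * F (Fin.snoc (α := fun _ => Bool) r x) +
      (-1) ^ N * (if x = false then F (Fin.snoc (α := fun _ => Bool)
        (Fin.snoc (α := fun _ => Bool) s true) true) else 0) := by
  rw [QBaux_sum_conf]
  have h (r : Conf (N + 1)) : r (Fin.last N) = Fin.snoc (α := fun _ => Bool) r true
    (Fin.last N).castSucc := by rw [Fin.snoc_castSucc]
  simp only [QBaux_Q, Fin.snoc_last, Fin.init_snoc, Fin.snoc_castSucc, add_mul,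
    Finset.sum_add_distrib]
  congr 1
  · refine Finset.sum_congr rfl fun r _ => ?_
    cases x <;> simp
  · rw [QBaux_sum_conf]
    simp only [Fin.snoc_last, Fin.init_snoc]
    cases x <;> simp [ite_and]

theorem QBaux_Q_rec_right (N : ℕ) (t : Conf N) (y y' : Bool) (F : Conf (N + 1) → ℂ) :
    ∑ r, F r * QBaux_Q (N + 1) r (Fin.snoc (α := fun _ => Bool)
        (Fin.snoc (α := fun _ => Bool) t y') y) =
      ∑ r, F (Fin.snoc (α := fun _ => Bool) r y) *
        QBaux_Q N r (Fin.snoc (α := fun _ => Bool) t y') +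
      (-1) ^ N * (if y' = true ∧ y = true then
        F (Fin.snoc (α := fun _ => Bool) t false) else 0) := by
  rw [QBaux_sum_conf]
  simp only [QBaux_Q, Fin.snoc_last, Fin.init_snoc, Fin.snoc_castSucc, mul_add,
    Finset.sum_add_distrib]
  congr 1
  · refine Finset.sum_congr rfl fun r _ => ?_
    cases y <;> simp
  · cases y <;> cases y' <;> simp [mul_comm]

/-- The defect of the commutation relation. -/
def QBaux_W (u : ℂ) (X : Bool → Bool → ℂ) : Bool → Bool → Bool → ℂ
  | true, true, true => dF u * X true false
  | true, true, false => 0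
  | false, false, true => bF u * X true false
  | false, false, false => 0
  | true, false, _ => 0
  | false, true, true => aF u * X true true + dF u * X false false
  | false, true, false => X true false

theorem QBaux_main (u : ℂ) (hd : dF u = - aF u - bF u)
    (hr : aF u ^ 2 + aF u * bF u + bF u ^ 2 = 1) (N : ℕ) :
    ∀ (e f y : Bool) (s t : Conf N),
    ∑ r, QBaux_Q N s r * Umono (N + 1) u (e, r) (f, Fin.snoc (α := fun _ => Bool) t y) =
      dF u ^ 2 * (∑ r, Umono N u (e, s) (f, r) *
        QBaux_Q N r (Fin.snoc (α := fun _ => Bool) t y)) -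
      (-1) ^ N * QBaux_W u (fun g h => Umono N u (g, s) (h, t)) e f y := by
  induction N with
  | zero =>
    intro e f y s t
    have hst : s = t := Subsingleton.elim _ _
    subst hst
    cases e <;> cases f <;> cases y <;>
      simp [QBaux_Q, QBaux_W, Umono, Tbar, Tmono, K0m, Km]
    ring
  | succ N ih =>
    intro e f y s t
    obtain ⟨s, x, rfl⟩ : ∃ s' x, s = Fin.snoc (α := fun _ => Bool) s' x :=
      ⟨_, _, (Fin.snoc_init_self s).symm⟩
    obtain ⟨t, y', rfl⟩ : ∃ t' x, t = Fin.snoc (α := fun _ => Bool) t' x :=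
      ⟨_, _, (Fin.snoc_init_self t).symm⟩
    rw [QBaux_Q_rec_left, QBaux_Q_rec_right]
    have hL : ∑ r, QBaux_Q N s r * Umono (N + 2) u (e, Fin.snoc (α := fun _ => Bool) r x)
        (f, Fin.snoc (α := fun _ => Bool) (Fin.snoc (α := fun _ => Bool) t y') y) =
        ∑ g : Bool, ∑ h : Bool, ∑ z : Bool, Rm u (x, e) (z, g) * Rm u (h, z) (f, y) *
          ∑ r, QBaux_Q N s r * Umono (N + 1) u (g, r)
            (h, Fin.snoc (α := fun _ => Bool) t y') := by
      simp only [QBaux_U_rec (N + 1), Finset.mul_sum, Fintype.sum_bool, ← Finset.sum_add_distrib]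
      refine Finset.sum_congr rfl fun r _ => ?_
      ring
    have hR : ∑ r, Umono (N + 1) u (e, Fin.snoc (α := fun _ => Bool) s x)
        (f, Fin.snoc (α := fun _ => Bool) r y) *
          QBaux_Q N r (Fin.snoc (α := fun _ => Bool) t y') =
        ∑ g : Bool, ∑ h : Bool, ∑ z : Bool, Rm u (x, e) (z, g) * Rm u (h, z) (f, y) *
          ∑ r, Umono N u (g, s) (h, r) * QBaux_Q N r (Fin.snoc (α := fun _ => Bool) t y') := by
      simp only [QBaux_U_rec N, Finset.mul_sum, Fintype.sum_bool, ← Finset.sum_add_distrib]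
      refine Finset.sum_congr rfl fun r _ => ?_
      ring
    rw [hL, hR]
    simp only [ih]
    generalize hP : (fun g h => ∑ r, Umono N u (g, s) (h, r) *
      QBaux_Q N r (Fin.snoc (α := fun _ => Bool) t y')) = P
    have hP' (g h : Bool) : ∑ r, Umono N u (g, s) (h, r) *
      QBaux_Q N r (Fin.snoc (α := fun _ => Bool) t y') = P g h := by rw [← hP]
    simp only [hP', QBaux_U_rec, pow_succ (-1 : ℂ) N]
    generalize hX : (fun g h => Umono N u (g, s) (h, t)) = X
    have hX' (g h : Bool) : Umono N u (g, s) (h, t) = X g h := by rw [← hX]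
    simp only [hX']
    generalize (-1 : ℂ) ^ N = σ
    clear hX hX' hP hP' hL hR ih
    simp only [Rm, Matrix.of_apply, cF, Fintype.sum_bool]
    rw [hd]
    cases e <;> cases f <;> cases x <;> cases y <;> cases y' <;>
      simp [QBaux_W, hd] <;> grind

theorem QBaux_cosh_eta : Complex.cosh ηc = -1 / 2 := by
  have h : ηc = ((Real.pi - Real.pi / 3 : ℝ) : ℂ) * Complex.I := by
    simp only [ηc]; push_cast; ring
  rw [h, Complex.cosh_mul_I, ← Complex.ofReal_cos, Real.cos_pi_sub, Real.cos_pi_div_three]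
  push_cast; ring

/-- The two algebraic relations at the combinatorial point. -/
theorem QBaux_rel (u : ℂ) : dF u = - aF u - bF u ∧
    aF u ^ 2 + aF u * bF u + bF u ^ 2 = 1 := by
  have hc := QBaux_cosh_eta
  have h1 := Complex.cosh_sq ηc
  have h2 := Complex.cosh_sq u
  have hs : Complex.sinh ηc ≠ 0 := by
    intro h
    rw [h, hc] at h1
    norm_num at h1
  simp only [aF, bF, dF, Complex.sinh_add, Complex.sinh_sub, hc]
  rw [hc] at h1
  constructor
  · field_simp
    ring
  · field_simp
    linear_combination 4 * Complex.sinh ηc ^ 2 * h2 - 4 * Complex.sinh u ^ 2 * h1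

/-- Theorem 1, ℬ-relation: for every `N = n+2 ≥ 2` and every `u ∈ ℂ`,
`Q^(N) ∘ ℬ^(N)(u) = d(u)² ℬ^(N-1)(u) ∘ Q^(N)` (`Qop n = Q^(n+2)`). -/
theorem QB_commutation (n : ℕ) (u : ℂ) :
    Qop n * Bop (n + 2) u = dF u ^ 2 • (Bop (n + 1) u * Qop n) := by
  ext s t
  obtain ⟨t, y, rfl⟩ : ∃ t' y, t = Fin.snoc (α := fun _ => Bool) t' y :=
    ⟨_, _, (Fin.snoc_init_self t).symm⟩
  have h := QBaux_main u (QBaux_rel u).1 (QBaux_rel u).2 (n + 1) true false y s t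
  simp only [Matrix.mul_apply, Matrix.smul_apply, smul_eq_mul, QBaux_Qop, Bop, Matrix.of_apply]
  simpa [QBaux_W] using h
end
end

section
/- (Recursion for ℬ) For every N ≥ 1 and every u ∈ ℂ: ℬ^(N+1)(u) = b(u)c(u) E⁺₋ ⊗ 𝒜^(N)(u) + a(u)b(u) I ⊗ ℬ^(N)(u) + b(u)c(u) E⁺₋ ⊗ 𝒟^(N)(u), where the first tensor factor acts on the new site N+1 and the size-N operators act on sites N,…,1. -/
noncomputable section
open Complex Matrix

/-- Split off the last site. -/
def splitLast (N : ℕ) : Bool × Conf (N + 1) ≃ (Bool × Conf N) × Bool where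
  toFun x := ((x.1, fun j => x.2 (Fin.castSucc j)), x.2 (Fin.last N))
  invFun z := (z.1.1, Fin.snoc (α := fun _ => Bool) z.1.2 z.2)
  left_inv x := by
    refine Prod.ext rfl ?_
    funext j
    refine Fin.lastCases ?_ (fun j => ?_) j <;> simp
  right_inv z := by
    refine Prod.ext (Prod.ext rfl ?_) ?_
    · funext j
      simp
    · simp

/-- Extension by the identity on the new site. -/
def liftHom (N : ℕ) : Matrix (Bool × Conf N) (Bool × Conf N) ℂ →*
    Matrix (Bool × Conf (N + 1)) (Bool × Conf (N + 1)) ℂ where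
  toFun X := (Matrix.kronecker X (1 : Matrix Bool Bool ℂ)).submatrix (splitLast N) (splitLast N)
  map_one' := by simp [Matrix.kronecker]
  map_mul' X Y := by
    rw [Matrix.submatrix_mul_equiv]
    congr 1
    have := Matrix.mul_kronecker_mul X Y (1 : Matrix Bool Bool ℂ) (1 : Matrix Bool Bool ℂ)
    rwa [one_mul] at this

theorem liftHom_apply (N : ℕ) (X) (x y) :
    liftHom N X x y = if x.2 (Fin.last N) = y.2 (Fin.last N) then
      X (x.1, fun j => x.2 (Fin.castSucc j)) (y.1, fun j => y.2 (Fin.castSucc j)) else 0 := by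
  simp [liftHom, splitLast, Matrix.one_apply, Matrix.kroneckerMap_apply]

theorem agree_iff (N : ℕ) (i : Fin N) (s t : Conf (N + 1)) :
    (∀ j, j ≠ Fin.castSucc i → s j = t j) ↔
      (s (Fin.last N) = t (Fin.last N) ∧
        ∀ j, j ≠ i → s (Fin.castSucc j) = t (Fin.castSucc j)) := by
  constructor
  · intro h
    exact ⟨h _ (Fin.castSucc_lt_last i).ne', fun j hj => h _ (by simpa using hj)⟩
  · rintro ⟨h1, h2⟩ j
    refine Fin.lastCases (fun _ => h1) (fun j hj => h2 j (by simpa using hj)) j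

theorem R0i_castSucc (N : ℕ) (u : ℂ) (i : Fin N) :
    R0i (N + 1) u (Fin.castSucc i) = liftHom N (R0i N u i) := by
  ext x y
  rw [liftHom_apply]
  simp only [R0i, Matrix.of_apply, agree_iff, ite_and]

theorem Ri0_castSucc (N : ℕ) (u : ℂ) (i : Fin N) :
    Ri0 (N + 1) u (Fin.castSucc i) = liftHom N (Ri0 N u i) := by
  ext x y
  rw [liftHom_apply]
  simp only [Ri0, Matrix.of_apply, agree_iff, ite_and]

theorem K0m_succ (N : ℕ) (u : ℂ) : K0m (N + 1) u = liftHom N (K0m N u) := by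
  ext x y
  rw [liftHom_apply]
  simp only [K0m, Matrix.of_apply, ← ite_and]
  congr 1
  rw [eq_iff_iff, funext_iff, funext_iff, Fin.forall_fin_succ', and_comm]

theorem Umono_succ (N : ℕ) (u : ℂ) :
    Umono (N + 1) u =
      Ri0 (N + 1) u (Fin.last N) * liftHom N (Umono N u) * R0i (N + 1) u (Fin.last N) := by
  have h1 : Tmono (N + 1) u = liftHom N (Tmono N u) * R0i (N + 1) u (Fin.last N) := by
    simp only [Tmono, List.ofFn_succ', List.concat_eq_append, List.prod_append, List.prod_singleton,
      R0i_castSucc, map_list_prod, List.map_ofFn]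
    rfl
  have h2 : Tbar (N + 1) u = Ri0 (N + 1) u (Fin.last N) * liftHom N (Tbar N u) := by
    simp only [Tbar, List.ofFn_succ', List.concat_eq_append, List.reverse_append,
      List.reverse_singleton, List.prod_append, List.prod_singleton,
      Ri0_castSucc, map_list_prod, List.map_ofFn, List.map_reverse]
    rfl
  simp only [Umono, h1, h2, K0m_succ, map_mul, mul_assoc]

theorem agree_last_iff (N : ℕ) (s t : Conf (N + 1)) :
    (∀ j, j ≠ Fin.last N → s j = t j) ↔
      (fun j => s (Fin.castSucc j)) = fun j => t (Fin.castSucc j) := by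
  rw [funext_iff]
  constructor
  · exact fun h j => h _ (Fin.castSucc_lt_last j).ne
  · intro h j
    refine Fin.lastCases (fun h => absurd rfl h) (fun j _ => h j) j

theorem Ri0_mul_apply (N : ℕ) (u : ℂ) (M : Matrix (Bool × Conf (N + 1)) (Bool × Conf (N + 1)) ℂ)
    (x y) : (Ri0 (N + 1) u (Fin.last N) * M) x y =
      ∑ p : Bool, ∑ q : Bool, Rm u (x.2 (Fin.last N), x.1) (q, p) *
        M (p, Fin.snoc (α := fun _ => Bool) (fun j => x.2 (Fin.castSucc j)) q) y := by
  rw [Matrix.mul_apply, ← (splitLast N).symm.sum_comp, Fintype.sum_prod_type, Fintype.sum_prod_type]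
  refine Finset.sum_congr rfl fun p _ => ?_
  rw [Finset.sum_comm]
  refine Finset.sum_congr rfl fun q _ => ?_
  rw [Finset.sum_eq_single (fun j => x.2 (Fin.castSucc j))]
  · simp [Ri0, splitLast, agree_last_iff]
  · intro s _ hs
    simp [Ri0, splitLast, agree_last_iff, hs.symm]
  · simp

theorem mul_R0i_apply (N : ℕ) (u : ℂ) (M : Matrix (Bool × Conf (N + 1)) (Bool × Conf (N + 1)) ℂ)
    (x y) : (M * R0i (N + 1) u (Fin.last N)) x y =
      ∑ p : Bool, ∑ q : Bool,
        M x (p, Fin.snoc (α := fun _ => Bool) (fun j => y.2 (Fin.castSucc j)) q) *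
        Rm u (p, q) (y.1, y.2 (Fin.last N)) := by
  rw [Matrix.mul_apply, ← (splitLast N).symm.sum_comp, Fintype.sum_prod_type, Fintype.sum_prod_type]
  refine Finset.sum_congr rfl fun p _ => ?_
  rw [Finset.sum_comm]
  refine Finset.sum_congr rfl fun q _ => ?_
  rw [Finset.sum_eq_single (fun j => y.2 (Fin.castSucc j))]
  · simp [R0i, splitLast, agree_last_iff]
  · intro s _ hs
    simp [R0i, splitLast, agree_last_iff, hs]
  · simp

/-- recursion for ℬ: for every `N ≥ 1` and every `u ∈ ℂ`,
`ℬ^(N+1)(u) = bc E⁺₋ ⊗ 𝒜^(N) + ab I ⊗ ℬ^(N) + bc E⁺₋ ⊗ 𝒟^(N)`,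
the first factor acting on the new (leftmost) site `N+1`. -/
theorem B_recursion (N : ℕ) (hN : 1 ≤ N) (u : ℂ) :
    Bop (N + 1) u
      = (bF u * cF u) • siteTens N (Eop true false) (Aop N u)
        + (aF u * bF u) • siteTens N (1 : Matrix Bool Bool ℂ) (Bop N u)
        + (bF u * cF u) • siteTens N (Eop true false) (Dop N u) := by
  ext s t
  simp only [Bop, Matrix.of_apply, Umono_succ, mul_R0i_apply, Ri0_mul_apply, liftHom_apply,
    Fintype.sum_bool, Fin.snoc_last, Fin.snoc_castSucc, Matrix.add_apply, Matrix.smul_apply,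
    siteTens, Aop, Dop, Eop, smul_eq_mul, Matrix.one_apply]
  cases s (Fin.last N) <;> cases t (Fin.last N) <;> simp [Rm] <;> ring
end
end
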